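/- Fix integers n, k ≥ 1, and let A be a connection form on ℝⁿ with curvature F. The following are equivalent: (i) for every smooth Φ : ℝⁿ → ℝᵏ one has M^D(DΦ) = 0 and for every smooth ℝᵏ-valued 1-form ψ one has Σ_b D_b((M^D ψ)_b) = 0 (i.e., the sequence E⁰ → E¹ → E₁ → E₀ given by d^D, M^D, δ^D is a complex); (ii) the Yang–Mills equation Σ_a (∂_a F_{ab} + A_a F_{ab} − F_{ab} A_a)(x) = 0 holds for every index b and every point x. (Flat-chart form of the main assertion of Theorem 3.2.) -/

import Mathlib

noncomputable section

/-- Points of `ℝⁿ`. -/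
abbrev Vec (n : ℕ) := Fin n → ℝ

/-- Real `k × k` matrices, as plain functions. -/
abbrev Mat (k : ℕ) := Fin k → Fin k → ℝ

/-- Matrix product. -/
def matMul {k : ℕ} (M N : Mat k) : Mat k := fun i j => ∑ l, M i l * N l j

/-- Matrix acting on a vector. -/
def matVec {k : ℕ} (M : Mat k) (v : Fin k → ℝ) : Fin k → ℝ := fun i => ∑ j, M i j * v j

/-- The identity matrix. -/
def idMat (k : ℕ) : Mat k := fun i j => if i = j then 1 else 0

/-- Partial derivative `∂_a f` in the `a`-th coordinate direction. -/
def pd {n : ℕ} {E : Type*} [NormedAddCommGroup E] [NormedSpace ℝ E]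
    (a : Fin n) (f : Vec n → E) (x : Vec n) : E :=
  fderiv ℝ f x (Pi.single a 1)

/-- The coupled covariant derivative `D_a φ = ∂_a φ + A_a φ` on `ℝᵏ`-valued maps. -/
def Dv {n k : ℕ} (A : Fin n → Vec n → Mat k) (a : Fin n)
    (φ : Vec n → Fin k → ℝ) (x : Vec n) : Fin k → ℝ :=
  pd a φ x + matVec (A a x) (φ x)

/-- The covariant derivative `D_a S = ∂_a S + A_a S − S A_a` on matrix-valued maps. -/
def Dm {n k : ℕ} (A : Fin n → Vec n → Mat k) (a : Fin n)
    (S : Vec n → Mat k) (x : Vec n) : Mat k :=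
  pd a S x + matMul (A a x) (S x) - matMul (S x) (A a x)

/-- The curvature `F_{ab} = ∂_a A_b − ∂_b A_a + A_a A_b − A_b A_a` of a connection form. -/
def curv {n k : ℕ} (A : Fin n → Vec n → Mat k) (a b : Fin n) (x : Vec n) : Mat k :=
  pd a (A b) x - pd b (A a) x + matMul (A a x) (A b x) - matMul (A b x) (A a x)

/-- The middle operator `(M^D ψ)_b = −Σ_a D_a(D_a ψ_b − D_b ψ_a) − Σ_a F_{ba} ψ_a`
of the Yang–Mills detour sequence, on `ℝᵏ`-valued 1-forms. -/
def MD {n k : ℕ} (A : Fin n → Vec n → Mat k) (ψ : Fin n → Vec n → Fin k → ℝ)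
    (b : Fin n) (x : Vec n) : Fin k → ℝ :=
  -(∑ a, Dv A a (fun y => Dv A a (ψ b) y - Dv A b (ψ a) y) x)
    - ∑ a, matVec (curv A b a x) (ψ a x)

/-!
Write `J_b = Σ_a D_a F_{ab}`. Covariant derivatives commute up to curvature,
`[D_a, D_b] φ = F_{ab} φ`, and `D` obeys the Leibniz rule for the action of matrices on vectors.
The curvature term of `M^D` is exactly what cancels the first-order terms that these two rules
produce, so both compositions are of order zero: `(M^D DΦ)_b = -J_b Φ` and
`δ^D M^D ψ = -Σ_b J_b ψ_b`. Testing on constants, each of them vanishes identically if and only if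
`J` does.
-/

section MatrixAction

variable {k : ℕ}

/-- The action of matrices on vectors as a continuous bilinear map. It makes the linearity lemmas
and the calculus of continuous bilinear maps available for `matVec`. -/
def matVecL (k : ℕ) : Mat k →L[ℝ] (Fin k → ℝ) →L[ℝ] (Fin k → ℝ) :=
  (LinearMap.mk₂ ℝ matVec Matrix.add_mulVec Matrix.smul_mulVec Matrix.mulVec_add
    fun c M v => Matrix.mulVec_smul M c v).toContinuousBilinearMap

theorem matVec_eq_matVecL (M : Mat k) (v : Fin k → ℝ) : matVec M v = matVecL k M v := rfl

theorem matVecL_matMul (M N : Mat k) (v : Fin k → ℝ) :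
    matVecL k (matMul M N) v = matVecL k M (matVecL k N v) :=
  (Matrix.mulVec_mulVec v M N).symm

theorem matVec_zero (M : Mat k) : matVec M 0 = 0 := Matrix.mulVec_zero M

theorem zero_matVec (v : Fin k → ℝ) : matVec 0 v = 0 := Matrix.zero_mulVec v

theorem neg_matVec (M : Mat k) (v : Fin k → ℝ) : matVec (-M) v = -matVec M v :=
  Matrix.neg_mulVec v M

theorem sum_matVec {ι : Type*} (s : Finset ι) (M : ι → Mat k) (v : Fin k → ℝ) :
    matVec (∑ i ∈ s, M i) v = ∑ i ∈ s, matVec (M i) v := by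
  simp only [matVec_eq_matVecL, map_sum, sum_apply]

theorem eq_zero_of_forall_matVec_eq_zero {M : Mat k} (h : ∀ v, matVec M v = 0) : M = 0 :=
  Matrix.ext_of_mulVec_single fun j => (h (Pi.single j 1)).trans (Matrix.zero_mulVec _).symm

variable {n : ℕ} {r : WithTop ℕ∞} {S T : Vec n → Mat k} {φ : Vec n → Fin k → ℝ}

theorem contDiff_matVec (hS : ContDiff ℝ r S) (hφ : ContDiff ℝ r φ) :
    ContDiff ℝ r fun y => matVec (S y) (φ y) :=
  (matVecL k).isBoundedBilinearMap.contDiff.comp (hS.prodMk hφ)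

theorem differentiableAt_matVec {x : Vec n} (hS : DifferentiableAt ℝ S x)
    (hφ : DifferentiableAt ℝ φ x) : DifferentiableAt ℝ (fun y => matVec (S y) (φ y)) x :=
  ((matVecL k).hasFDerivAt_of_bilinear hS.hasFDerivAt hφ.hasFDerivAt).differentiableAt

theorem contDiff_matMul (hS : ContDiff ℝ r S) (hT : ContDiff ℝ r T) :
    ContDiff ℝ r fun y => matMul (S y) (T y) := by
  unfold matMul
  fun_prop

end MatrixAction

section PartialDerivative

variable {n : ℕ} {E : Type*} [NormedAddCommGroup E] [NormedSpace ℝ E]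
  {f g : Vec n → E} {x : Vec n} (a b : Fin n)

theorem contDiff_pd {r s : WithTop ℕ∞} (hf : ContDiff ℝ s f) (hrs : r + 1 ≤ s) :
    ContDiff ℝ r (pd a f) :=
  (hf.fderiv_right hrs).clm_apply contDiff_const

theorem pd_add (hf : DifferentiableAt ℝ f x) (hg : DifferentiableAt ℝ g x) :
    pd a (fun y => f y + g y) x = pd a f x + pd a g x := by
  simp only [pd, fderiv_fun_add hf hg, add_apply]

theorem pd_neg : pd a (fun y => -f y) x = -pd a f x := by
  simp only [pd, fderiv_fun_neg, neg_apply]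

theorem pd_sum {ι : Type*} {s : Finset ι} {f : ι → Vec n → E}
    (hf : ∀ i ∈ s, DifferentiableAt ℝ (f i) x) :
    pd a (fun y => ∑ i ∈ s, f i y) x = ∑ i ∈ s, pd a (f i) x := by
  simp only [pd, fderiv_fun_sum hf, sum_apply]

theorem pd_pd_eq_fderiv_fderiv (hf : ContDiff ℝ 2 f) :
    pd a (pd b f) x = fderiv ℝ (fderiv ℝ f) x (Pi.single a 1) (Pi.single b 1) := by
  have hf' : DifferentiableAt ℝ (fderiv ℝ f) x :=
    (hf.fderiv_right one_add_one_eq_two.le).differentiable one_ne_zero x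
  unfold pd
  simp [fderiv_clm_apply hf' (differentiableAt_const _)]

theorem pd_comm (hf : ContDiff ℝ 2 f) : pd a (pd b f) x = pd b (pd a f) x := by
  have symm : IsSymmSndFDerivAt ℝ f x := hf.contDiffAt.isSymmSndFDerivAt (by simp)
  rw [pd_pd_eq_fderiv_fderiv a b hf, pd_pd_eq_fderiv_fderiv b a hf, symm.eq]

theorem pd_matVec {k : ℕ} {S : Vec n → Mat k} {φ : Vec n → Fin k → ℝ}
    (hS : DifferentiableAt ℝ S x) (hφ : DifferentiableAt ℝ φ x) :
    pd a (fun y => matVec (S y) (φ y)) x = matVec (S x) (pd a φ x) + matVec (pd a S x) (φ x) :=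
  congrArg (fun L => L (Pi.single a 1)) ((matVecL k).fderiv_of_bilinear hS hφ)

end PartialDerivative

section CovariantDerivative

variable {n k : ℕ} {A : Fin n → Vec n → Mat k} {S : Vec n → Mat k} {φ χ : Vec n → Fin k → ℝ}
  {x : Vec n} (a : Fin n)

theorem contDiff_Dv {r s : WithTop ℕ∞} (hA : ContDiff ℝ r (A a)) (hφ : ContDiff ℝ s φ)
    (hrs : r + 1 ≤ s) : ContDiff ℝ r (Dv A a φ) :=
  (contDiff_pd a hφ hrs).add (contDiff_matVec hA (hφ.of_le (le_self_add.trans hrs)))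

theorem differentiable_Dv (hA : ContDiff ℝ 1 (A a)) (hφ : ContDiff ℝ 2 φ) :
    Differentiable ℝ (Dv A a φ) :=
  (contDiff_Dv a hA hφ one_add_one_eq_two.le).differentiable one_ne_zero

theorem Dv_add (hφ : DifferentiableAt ℝ φ x) (hχ : DifferentiableAt ℝ χ x) :
    Dv A a (fun y => φ y + χ y) x = Dv A a φ x + Dv A a χ x := by
  simp only [Dv, pd_add a hφ hχ, matVec_eq_matVecL, map_add]
  abel

theorem Dv_neg : Dv A a (fun y => -φ y) x = -Dv A a φ x := by
  simp only [Dv, pd_neg, matVec_eq_matVecL, map_neg, neg_add]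

theorem Dv_sub (hφ : DifferentiableAt ℝ φ x) (hχ : DifferentiableAt ℝ χ x) :
    Dv A a (fun y => φ y - χ y) x = Dv A a φ x - Dv A a χ x := by
  simp only [sub_eq_add_neg, Dv_add a hφ hχ.fun_neg, Dv_neg]

theorem Dv_sum {ι : Type*} {s : Finset ι} {φ : ι → Vec n → Fin k → ℝ}
    (hφ : ∀ i ∈ s, DifferentiableAt ℝ (φ i) x) :
    Dv A a (fun y => ∑ i ∈ s, φ i y) x = ∑ i ∈ s, Dv A a (φ i) x := by
  simp only [Dv, pd_sum a hφ, matVec_eq_matVecL, map_sum, Finset.sum_add_distrib]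

theorem Dv_matVec (hS : DifferentiableAt ℝ S x) (hφ : DifferentiableAt ℝ φ x) :
    Dv A a (fun y => matVec (S y) (φ y)) x
      = matVec (Dm A a S x) (φ x) + matVec (S x) (Dv A a φ x) := by
  unfold Dv Dm
  rw [pd_matVec a hS hφ]
  simp only [matVec_eq_matVecL, map_add, map_sub, add_apply, sub_apply, matVecL_matMul]
  abel

end CovariantDerivative

section Curvature

variable {n k : ℕ} {A : Fin n → Vec n → Mat k} {a b : Fin n} {x : Vec n}

theorem curv_antisymm (A : Fin n → Vec n → Mat k) (a b : Fin n) (x : Vec n) :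
    curv A a b x = -curv A b a x := by
  unfold curv
  abel

theorem contDiff_curv {r s : WithTop ℕ∞} (ha : ContDiff ℝ s (A a)) (hb : ContDiff ℝ s (A b))
    (hrs : r + 1 ≤ s) : ContDiff ℝ r (curv A a b) := by
  have ha' : ContDiff ℝ r (A a) := ha.of_le (le_self_add.trans hrs)
  have hb' : ContDiff ℝ r (A b) := hb.of_le (le_self_add.trans hrs)
  exact (((contDiff_pd a hb hrs).sub (contDiff_pd b ha hrs)).add (contDiff_matMul ha' hb')).sub
    (contDiff_matMul hb' ha')

theorem differentiable_curv (ha : ContDiff ℝ 2 (A a)) (hb : ContDiff ℝ 2 (A b)) :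
    Differentiable ℝ (curv A a b) :=
  (contDiff_curv ha hb one_add_one_eq_two.le).differentiable one_ne_zero

theorem Dv_Dv (hb : DifferentiableAt ℝ (A b) x) {φ : Vec n → Fin k → ℝ} (hφ : ContDiff ℝ 2 φ) :
    Dv A a (Dv A b φ) x
      = pd a (pd b φ) x + matVec (A b x) (pd a φ x) + matVec (pd a (A b) x) (φ x)
        + matVec (A a x) (pd b φ x) + matVec (matMul (A a x) (A b x)) (φ x) := by
  have hφ' : Differentiable ℝ φ := hφ.differentiable two_ne_zero
  have hpd : Differentiable ℝ (pd b φ) :=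
    (contDiff_pd b hφ one_add_one_eq_two.le).differentiable one_ne_zero
  unfold Dv
  rw [pd_add a (hpd x) (differentiableAt_matVec hb (hφ' x)), pd_matVec a hb (hφ' x)]
  simp only [matVec_eq_matVecL, map_add, matVecL_matMul]
  abel

theorem Dv_Dv_sub_Dv_Dv (ha : DifferentiableAt ℝ (A a) x) (hb : DifferentiableAt ℝ (A b) x)
    {φ : Vec n → Fin k → ℝ} (hφ : ContDiff ℝ 2 φ) :
    Dv A a (Dv A b φ) x - Dv A b (Dv A a φ) x = matVec (curv A a b x) (φ x) := by
  rw [Dv_Dv hb hφ, Dv_Dv ha hφ, pd_comm a b hφ]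
  simp only [curv, matVec_eq_matVecL, map_add, map_sub, add_apply, sub_apply]
  abel

end Curvature

section DetourComplex

variable {n k : ℕ} {A : Fin n → Vec n → Mat k}

/-- The component `(d^D ψ)_{ab} = D_a ψ_b − D_b ψ_a` of the covariant exterior derivative of a
1-form, the inner first-order operator of `M^D`. -/
def extDv (A : Fin n → Vec n → Mat k) (ψ : Fin n → Vec n → Fin k → ℝ) (a b : Fin n)
    (x : Vec n) : Fin k → ℝ :=
  Dv A a (ψ b) x - Dv A b (ψ a) x

/-- The covariant divergence `Σ_a D_a F_{ab}` of the curvature, whose vanishing is the Yang–Mills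
equation. -/
def yangMillsCurrent (A : Fin n → Vec n → Mat k) (b : Fin n) (x : Vec n) : Mat k :=
  ∑ a, Dm A a (curv A a b) x

theorem MD_eq_extDv (A : Fin n → Vec n → Mat k) (ψ : Fin n → Vec n → Fin k → ℝ) (b : Fin n) :
    MD A ψ b = fun x =>
      -(∑ a, Dv A a (extDv A ψ a b) x) - ∑ a, matVec (curv A b a x) (ψ a x) := rfl

theorem contDiff_extDv {r s : WithTop ℕ∞} (hA : ∀ a, ContDiff ℝ r (A a))
    {ψ : Fin n → Vec n → Fin k → ℝ} (hψ : ∀ a, ContDiff ℝ s (ψ a)) (hrs : r + 1 ≤ s)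
    (a b : Fin n) : ContDiff ℝ r (extDv A ψ a b) :=
  (contDiff_Dv a (hA a) (hψ b) hrs).sub (contDiff_Dv b (hA b) (hψ a) hrs)

theorem extDv_Dv (hA : ∀ a, Differentiable ℝ (A a)) {Φ : Vec n → Fin k → ℝ}
    (hΦ : ContDiff ℝ 2 Φ) (a b : Fin n) :
    extDv A (fun c => Dv A c Φ) a b = fun x => matVec (curv A a b x) (Φ x) :=
  funext fun x => Dv_Dv_sub_Dv_Dv (hA a x) (hA b x) hΦ

theorem MD_Dv (hA : ∀ a, ContDiff ℝ 2 (A a)) {Φ : Vec n → Fin k → ℝ} (hΦ : ContDiff ℝ 2 Φ)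
    (b : Fin n) (x : Vec n) :
    MD A (fun a => Dv A a Φ) b x = -matVec (yangMillsCurrent A b x) (Φ x) := by
  have Dv_extDv_Dv (a : Fin n) :
      Dv A a (extDv A (fun c => Dv A c Φ) a b) x
        = matVec (Dm A a (curv A a b) x) (Φ x) - matVec (curv A b a x) (Dv A a Φ x) := by
    rw [extDv_Dv (fun c => (hA c).differentiable two_ne_zero) hΦ,
      Dv_matVec a (differentiable_curv (hA a) (hA b) x) (hΦ.differentiable two_ne_zero x),
      curv_antisymm A a b x, neg_matVec, sub_eq_add_neg]
  simp only [MD_eq_extDv, Dv_extDv_Dv, yangMillsCurrent, sum_matVec, Finset.sum_sub_distrib]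
  abel

theorem Dv_Dv_extDv (hA : ∀ a, ContDiff ℝ 2 (A a)) {ψ : Fin n → Vec n → Fin k → ℝ}
    (hψ : ∀ a, ContDiff ℝ 3 (ψ a)) (a b : Fin n) (x : Vec n) :
    Dv A b (Dv A a (extDv A ψ a b)) x
      = Dv A b (Dv A a (Dv A a (ψ b))) x - Dv A b (Dv A a (Dv A b (ψ a))) x := by
  have hDψ (c d : Fin n) : ContDiff ℝ 2 (Dv A c (ψ d)) :=
    contDiff_Dv c (hA c) (hψ d) two_add_one_eq_three.le
  have hDDψ (c d : Fin n) : Differentiable ℝ (Dv A a (Dv A c (ψ d))) :=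
    differentiable_Dv a ((hA a).of_le one_le_two) (hDψ c d)
  have Dv_extDv : Dv A a (extDv A ψ a b)
      = fun y => Dv A a (Dv A a (ψ b)) y - Dv A a (Dv A b (ψ a)) y :=
    funext fun y => Dv_sub a ((hDψ a b).differentiable two_ne_zero y)
      ((hDψ b a).differentiable two_ne_zero y)
  rw [Dv_extDv, Dv_sub b (hDDψ a b x) (hDDψ b a x)]

-- Relabelling `a ↔ b` in `D_b D_a D_a ψ_b` turns the sum into commutators applied to `D_b ψ_a`.
theorem sum_Dv_Dv_extDv (hA : ∀ a, ContDiff ℝ 2 (A a)) {ψ : Fin n → Vec n → Fin k → ℝ}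
    (hψ : ∀ a, ContDiff ℝ 3 (ψ a)) (x : Vec n) :
    ∑ b, ∑ a, Dv A b (Dv A a (extDv A ψ a b)) x
      = ∑ b, ∑ a, matVec (curv A a b x) (Dv A b (ψ a) x) := by
  have hA' (a : Fin n) : DifferentiableAt ℝ (A a) x := (hA a).differentiable two_ne_zero x
  have hDψ (a b : Fin n) : ContDiff ℝ 2 (Dv A b (ψ a)) :=
    contDiff_Dv b (hA b) (hψ a) two_add_one_eq_three.le
  calc ∑ b, ∑ a, Dv A b (Dv A a (extDv A ψ a b)) x
      = ∑ b, ∑ a, Dv A b (Dv A a (Dv A a (ψ b))) x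
          - ∑ b, ∑ a, Dv A b (Dv A a (Dv A b (ψ a))) x := by
        simp only [Dv_Dv_extDv hA hψ, Finset.sum_sub_distrib]
    _ = ∑ b, ∑ a, (Dv A a (Dv A b (Dv A b (ψ a))) x - Dv A b (Dv A a (Dv A b (ψ a))) x) := by
        rw [Finset.sum_comm]
        simp only [Finset.sum_sub_distrib]
    _ = ∑ b, ∑ a, matVec (curv A a b x) (Dv A b (ψ a) x) := by
        simp only [Dv_Dv_sub_Dv_Dv (hA' _) (hA' _) (hDψ _ _)]

theorem Dv_MD (hA : ∀ a, ContDiff ℝ 2 (A a)) {ψ : Fin n → Vec n → Fin k → ℝ}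
    (hψ : ∀ a, ContDiff ℝ 3 (ψ a)) (b : Fin n) (x : Vec n) :
    Dv A b (MD A ψ b) x
      = -(∑ a, Dv A b (Dv A a (extDv A ψ a b)) x)
        - ∑ a, (matVec (Dm A b (curv A b a) x) (ψ a x)
          + matVec (curv A b a x) (Dv A b (ψ a) x)) := by
  have hDdψ (a : Fin n) : DifferentiableAt ℝ (Dv A a (extDv A ψ a b)) x :=
    differentiable_Dv a ((hA a).of_le one_le_two)
      (contDiff_extDv hA hψ two_add_one_eq_three.le a b) x
  have hF (a : Fin n) : DifferentiableAt ℝ (curv A b a) x := differentiable_curv (hA b) (hA a) x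
  have hψ' (a : Fin n) : DifferentiableAt ℝ (ψ a) x := (hψ a).differentiable three_ne_zero x
  have hFψ (a : Fin n) : DifferentiableAt ℝ (fun y => matVec (curv A b a y) (ψ a y)) x :=
    differentiableAt_matVec (hF a) (hψ' a)
  rw [MD_eq_extDv, Dv_sub b (by fun_prop) (by fun_prop), Dv_neg, Dv_sum b fun a _ => hDdψ a,
    Dv_sum b fun a _ => hFψ a]
  simp only [Dv_matVec b (hF _) (hψ' _)]

theorem sum_Dv_MD (hA : ∀ a, ContDiff ℝ 2 (A a)) {ψ : Fin n → Vec n → Fin k → ℝ}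
    (hψ : ∀ a, ContDiff ℝ 3 (ψ a)) (x : Vec n) :
    ∑ b, Dv A b (MD A ψ b) x = -∑ b, matVec (yangMillsCurrent A b x) (ψ b x) := by
  have curvature_terms :
      ∑ b, ∑ a, matVec (curv A a b x) (Dv A b (ψ a) x)
        = -∑ b, ∑ a, matVec (curv A b a x) (Dv A b (ψ a) x) := by
    simp only [← Finset.sum_neg_distrib, ← neg_matVec, ← curv_antisymm]
  have current_terms :
      ∑ b, ∑ a, matVec (Dm A b (curv A b a) x) (ψ a x)
        = ∑ b, matVec (yangMillsCurrent A b x) (ψ b x) := by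
    rw [Finset.sum_comm]
    simp only [yangMillsCurrent, sum_matVec]
  simp only [Dv_MD hA hψ, Finset.sum_sub_distrib, Finset.sum_neg_distrib, Finset.sum_add_distrib,
    sum_Dv_Dv_extDv hA hψ, curvature_terms, current_terms]
  abel

theorem forall_MD_Dv_eq_zero_iff (hA : ∀ a, ContDiff ℝ 2 (A a)) {r : WithTop ℕ∞}
    (hr : 2 ≤ r) :
    (∀ Φ : Vec n → Fin k → ℝ, ContDiff ℝ r Φ → ∀ b x, MD A (fun a => Dv A a Φ) b x = 0)
      ↔ ∀ b x, yangMillsCurrent A b x = 0 := by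
  constructor
  · intro h b x
    refine eq_zero_of_forall_matVec_eq_zero fun v => ?_
    rw [← neg_eq_zero, ← MD_Dv hA (contDiff_const (c := v)) b x]
    exact h _ contDiff_const b x
  · intro h Φ hΦ b x
    rw [MD_Dv hA (hΦ.of_le hr), h, zero_matVec, neg_zero]

theorem forall_sum_Dv_MD_eq_zero_iff (hA : ∀ a, ContDiff ℝ 2 (A a)) {r : WithTop ℕ∞}
    (hr : 3 ≤ r) :
    (∀ ψ : Fin n → Vec n → Fin k → ℝ, (∀ a, ContDiff ℝ r (ψ a)) →
        ∀ x, ∑ b, Dv A b (MD A ψ b) x = 0)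
      ↔ ∀ b x, yangMillsCurrent A b x = 0 := by
  constructor
  · intro h b x
    refine eq_zero_of_forall_matVec_eq_zero fun v => ?_
    have hδM := h (fun a _ => Pi.single (M := fun _ => Fin k → ℝ) b v a) (fun _ => contDiff_const) x
    rw [sum_Dv_MD hA fun _ => contDiff_const, neg_eq_zero] at hδM
    rwa [Fintype.sum_eq_single b fun c hc => by rw [Pi.single_eq_of_ne hc, matVec_zero],
      Pi.single_eq_same] at hδM
  · intro h ψ hψ x
    simp only [sum_Dv_MD hA fun a => (hψ a).of_le hr, h, zero_matVec, Finset.sum_const_zero,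
      neg_zero]

theorem yangMills_detour_complex_iff_general (hA : ∀ a, ContDiff ℝ 2 (A a)) {r : WithTop ℕ∞}
    (hr : 3 ≤ r) :
    ((∀ Φ : Vec n → Fin k → ℝ, ContDiff ℝ r Φ → ∀ b x, MD A (fun a => Dv A a Φ) b x = 0) ∧
      (∀ ψ : Fin n → Vec n → Fin k → ℝ, (∀ a, ContDiff ℝ r (ψ a)) →
        ∀ x, ∑ b, Dv A b (MD A ψ b) x = 0))
      ↔ ∀ b x, ∑ a, Dm A a (curv A a b) x = 0 := by
  have two_le : 2 ≤ r := le_trans (by norm_num) hr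
  rw [forall_MD_Dv_eq_zero_iff hA two_le, forall_sum_Dv_MD_eq_zero_iff hA hr, and_self]
  rfl

end DetourComplex

/-- Flat-chart form of the main assertion of Theorem 3.2: the sequence
`E⁰ → E¹ → E₁ → E₀` given by `d^D`, `M^D`, `δ^D` is a complex if and only if the
connection form `A` satisfies the Yang–Mills equation `Σ_a D_a F_{ab} = 0`. -/
theorem yangMills_detour_complex_iff (n k : ℕ) (hn : 1 ≤ n) (hk : 1 ≤ k)
    (A : Fin n → Vec n → Mat k) (hA : ∀ a, ContDiff ℝ (⊤ : ℕ∞) (A a)) :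
    ((∀ Φ : Vec n → Fin k → ℝ, ContDiff ℝ (⊤ : ℕ∞) Φ →
        ∀ (b : Fin n) (x : Vec n), MD A (fun a => Dv A a Φ) b x = 0) ∧
     (∀ ψ : Fin n → Vec n → Fin k → ℝ, (∀ a, ContDiff ℝ (⊤ : ℕ∞) (ψ a)) →
        ∀ x : Vec n, ∑ b, Dv A b (fun y => MD A ψ b y) x = 0))
    ↔ (∀ (b : Fin n) (x : Vec n), ∑ a, Dm A a (curv A a b) x = 0) :=
  yangMills_detour_complex_iff_general (fun a => (hA a).of_le (WithTop.coe_le_coe.2 le_top))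
    (WithTop.coe_le_coe.2 le_top)
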